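/- arXiv:1411.0289 — 12 statements merged into one kernel-verified Lean document; each statement's English description precedes it below -/
import Mathlib

section
/- Let α, β, γ, δ be real numbers and set σ = (α+β+γ+δ)/2, ᾱ = σ−α, β̄ = σ−β, γ̄ = σ−γ, δ̄ = σ−δ. Then the following identities hold: (i) ᾱ + β̄ = γ + δ; (ii) sin ᾱ · sin β̄ − sin α · sin β = sin σ · sin(σ−α−β) = sin γ · sin δ − sin γ̄ · sin δ̄; (iii) sin α · sin β − sin γ̄ · sin δ̄ = sin(σ−α−γ) · sin(σ−β−γ) = sin ᾱ · sin β̄ − sin γ · sin δ; (iv) sin σ · sin(σ−α−β) · sin(σ−β−γ) · sin(σ−α−γ) = sin α · sin β · sin γ · sin δ − sin ᾱ · sin β̄ · sin γ̄ · sin δ̄. -/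
open Real

/-! Put `a = sin α sin β`, `b = sin αb sin βb`, `c = sin γ sin δ`, `d = sin γb sin δb`. The pairs
behind `a` and `b` have opposite differences, as do those behind `c` and `d`, while the pairs behind
`b` and `c` have equal sums; in either situation the difference of the two products of sines is
again a product of sines. The factorizations of `b - a` and `c - d` agree, so `b - a = c - d`. Hence
`a - d = b - c`, and the quartic identity is `(b - a) * (b - c) = a * c - b * d`. -/

lemma sin_mul_sin_sub_sin_mul_sin_of_add_eq_add {w x y z : ℝ} (h : w + x = y + z) :
    sin w * sin x - sin y * sin z = sin (w - y) * sin (x - y) := by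
  have hwx : 2 * sin w * sin x = cos (w - x) - cos (y + z) := by
    rw [two_mul_sin_mul_sin, h]
  have hyz : 2 * sin y * sin z = cos (y - z) - cos (y + z) := two_mul_sin_mul_sin y z
  have hdiff : 2 * sin (w - y) * sin (x - y) = cos (w - x) - cos (y - z) := by
    rw [two_mul_sin_mul_sin, sub_sub_sub_cancel_right, ← cos_neg (y - z)]
    congr 2
    linarith
  linarith

lemma sin_mul_sin_sub_sin_mul_sin_of_sub_eq_sub {w x y z : ℝ} (h : w - x = y - z) :
    sin w * sin x - sin y * sin z = sin (w - y) * sin (x + y) := by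
  have hneg : w + -x = y + -z := by simpa only [sub_eq_add_neg] using h
  have hfactor := sin_mul_sin_sub_sin_mul_sin_of_add_eq_add hneg
  rw [← neg_add', sin_neg, sin_neg, sin_neg] at hfactor
  linarith

lemma sub_mul_sub_eq_mul_sub_mul_of_sub_eq_sub {R : Type*} [CommRing R] {a b c d : R}
    (h : b - a = c - d) : (b - a) * (b - c) = a * c - b * d := by
  linear_combination b * h

theorem bar_relations (α β γ δ σ αb βb γb δb : ℝ)
    (hσ : σ = (α + β + γ + δ) / 2)
    (hα : αb = σ - α) (hβ : βb = σ - β) (hγ : γb = σ - γ) (hδ : δb = σ - δ) :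
    αb + βb = γ + δ ∧
    (sin αb * sin βb - sin α * sin β = sin σ * sin (σ - α - β) ∧
      sin σ * sin (σ - α - β) = sin γ * sin δ - sin γb * sin δb) ∧
    (sin α * sin β - sin γb * sin δb = sin (σ - α - γ) * sin (σ - β - γ) ∧
      sin (σ - α - γ) * sin (σ - β - γ) = sin αb * sin βb - sin γ * sin δ) ∧
    sin σ * sin (σ - α - β) * sin (σ - β - γ) * sin (σ - α - γ) =
      sin α * sin β * sin γ * sin δ - sin αb * sin βb * sin γb * sin δb := by
  have hsum : αb + βb = γ + δ := by linarith
  have hba : sin αb * sin βb - sin α * sin β = sin σ * sin (σ - α - β) := by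
    rw [mul_comm (sin α), sin_mul_sin_sub_sin_mul_sin_of_sub_eq_sub (by linarith),
      hα, hβ, sub_add_cancel, mul_comm]
  have hcd : sin γ * sin δ - sin γb * sin δb = sin σ * sin (σ - α - β) := by
    rw [mul_comm (sin γb), sin_mul_sin_sub_sin_mul_sin_of_sub_eq_sub (by linarith),
      show γ - δb = σ - α - β by linarith, hδ, add_sub_cancel, mul_comm]
  have hbc : sin αb * sin βb - sin γ * sin δ = sin (σ - α - γ) * sin (σ - β - γ) := by
    rw [sin_mul_sin_sub_sin_mul_sin_of_add_eq_add hsum, hα, hβ]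
  have hquartic := sub_mul_sub_eq_mul_sub_mul_of_sub_eq_sub (hba.trans hcd.symm)
  rw [hba, hbc] at hquartic
  exact ⟨hsum, ⟨hba, hcd.symm⟩, ⟨by linarith, hbc.symm⟩, by linarith⟩
end

section
/- Let α, β, γ, δ be real numbers such that for every choice of signs ε₁, ε₂, ε₃ ∈ {−1, +1} the number α + ε₁β + ε₂γ + ε₃δ is not an integer multiple of 2π. Then sin α · sin β · sin γ · sin δ ≠ sin ᾱ · sin β̄ · sin γ̄ · sin δ̄, where σ = (α+β+γ+δ)/2, ᾱ = σ−α, β̄ = σ−β, γ̄ = σ−γ, δ̄ = σ−δ. Equivalently, for a spherical quadrilateral of elliptic type the modulus M = (sin α sin β sin γ sin δ)/(sin ᾱ sin β̄ sin γ̄ sin δ̄) is different from 1. -/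
open Real

/-!
The difference of the two products of sines is the product of the four numbers
`sin ((α + ε₁ β + ε₂ γ + ε₁ ε₂ δ) / 2)` with signs `ε₁`, `ε₂`. It vanishes exactly when one of the
sums `α + ε₁ β + ε₂ γ + ε₁ ε₂ δ` lies in `2πℤ`. The argument is valid for complex angles.
-/

theorem units_int_cast_eq_one_or_neg_one {R : Type*} [AddGroupWithOne R] (ε : ℤˣ) :
    ((ε : ℤ) : R) = 1 ∨ ((ε : ℤ) : R) = -1 := by
  rcases Int.units_eq_one_or ε with rfl | rfl <;> simp

theorem forall_units_int_iff {p : ℤˣ → Prop} : (∀ ε, p ε) ↔ p 1 ∧ p (-1) where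
  mp hp := ⟨hp 1, hp (-1)⟩
  mpr hp ε := by rcases Int.units_eq_one_or ε with rfl | rfl <;> simp [hp]

theorem complex_sin_half_ne_zero_iff {z : ℂ} :
    Complex.sin (z / 2) ≠ 0 ↔ ∀ n : ℤ, z ≠ n * (2 * π) := by
  rw [Complex.sin_ne_zero_iff]
  refine forall_congr' fun n => not_congr ?_
  rw [div_eq_iff two_ne_zero, mul_assoc, mul_comm (π : ℂ)]

theorem complex_sin_mul_sin (x y : ℂ) :
    Complex.sin x * Complex.sin y = (Complex.cos (x - y) - Complex.cos (x + y)) / 2 := by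
  rw [Complex.cos_sub, Complex.cos_add]
  ring

theorem complex_sin_prod_sub_sin_prod (α β γ δ σ : ℂ) (hσ : σ = (α + β + γ + δ) / 2) :
    Complex.sin α * Complex.sin β * Complex.sin γ * Complex.sin δ -
        Complex.sin (σ - α) * Complex.sin (σ - β) * Complex.sin (σ - γ) * Complex.sin (σ - δ) =
      Complex.sin ((α + β + γ + δ) / 2) * Complex.sin ((α + β - γ - δ) / 2) *
        (Complex.sin ((α - β + γ - δ) / 2) * Complex.sin ((α - β - γ + δ) / 2)) := by
  have sin_bar_α_β : Complex.sin (σ - α) * Complex.sin (σ - β) =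
      (Complex.cos (α - β) - Complex.cos (γ + δ)) / 2 := by
    rw [complex_sin_mul_sin, hσ, ← Complex.cos_neg (α - β)]
    ring_nf
  have sin_bar_γ_δ : Complex.sin (σ - γ) * Complex.sin (σ - δ) =
      (Complex.cos (γ - δ) - Complex.cos (α + β)) / 2 := by
    rw [complex_sin_mul_sin, hσ, ← Complex.cos_neg (γ - δ)]
    ring_nf
  have sin_sums : Complex.sin ((α + β + γ + δ) / 2) * Complex.sin ((α + β - γ - δ) / 2) =
      (Complex.cos (γ + δ) - Complex.cos (α + β)) / 2 := by
    rw [complex_sin_mul_sin]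
    ring_nf
  have sin_differences :
      Complex.sin ((α - β + γ - δ) / 2) * Complex.sin ((α - β - γ + δ) / 2) =
      (Complex.cos (γ - δ) - Complex.cos (α - β)) / 2 := by
    rw [complex_sin_mul_sin]
    ring_nf
  -- With `A, B = cos (α ∓ β)` and `C, D = cos (γ ∓ δ)`, what remains is
  -- `(A - B) * (C - D) - (A - D) * (C - B) = (D - B) * (C - A)`.
  rw [sin_sums, sin_differences, mul_assoc _ (Complex.sin γ), mul_assoc _ (Complex.sin (σ - γ)),
    sin_bar_α_β, sin_bar_γ_δ, complex_sin_mul_sin α β, complex_sin_mul_sin γ δ]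
  ring

theorem elliptic_modulus_ne_one_general (α β γ δ σ : ℂ) (hσ : σ = (α + β + γ + δ) / 2) :
    Complex.sin α * Complex.sin β * Complex.sin γ * Complex.sin δ ≠
        Complex.sin (σ - α) * Complex.sin (σ - β) * Complex.sin (σ - γ) * Complex.sin (σ - δ) ↔
      ∀ (ε₁ ε₂ : ℤˣ) (n : ℤ), α + ε₁ * β + ε₂ * γ + (ε₁ * ε₂ : ℤˣ) * δ ≠ n * (2 * π) := by
  rw [← sub_ne_zero, complex_sin_prod_sub_sin_prod α β γ δ σ hσ]
  simp only [mul_ne_zero_iff, complex_sin_half_ne_zero_iff, forall_units_int_iff]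
  simp [sub_eq_add_neg]

theorem elliptic_modulus_ne_one (α β γ δ σ αb βb γb δb : ℝ)
    (hσ : σ = (α + β + γ + δ) / 2)
    (hα : αb = σ - α) (hβ : βb = σ - β) (hγ : γb = σ - γ) (hδ : δb = σ - δ)
    (h : ∀ ε₁ ε₂ ε₃ : ℝ, (ε₁ = 1 ∨ ε₁ = -1) → (ε₂ = 1 ∨ ε₂ = -1) → (ε₃ = 1 ∨ ε₃ = -1) →
      ∀ n : ℤ, α + ε₁ * β + ε₂ * γ + ε₃ * δ ≠ n * (2 * π)) :
    sin α * sin β * sin γ * sin δ ≠ sin αb * sin βb * sin γb * sin δb := by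
  subst hα hβ hγ hδ
  exact_mod_cast (elliptic_modulus_ne_one_general α β γ δ σ (by exact_mod_cast hσ)).mpr
    fun ε₁ ε₂ n => by
      exact_mod_cast h _ _ _ (units_int_cast_eq_one_or_neg_one ε₁)
        (units_int_cast_eq_one_or_neg_one ε₂) (units_int_cast_eq_one_or_neg_one (ε₁ * ε₂)) n
end

section
/- Let α, β, γ, δ be real numbers with 0 < α, β, γ, δ < π satisfying α < β+γ+δ < α+2π, β < α+γ+δ < β+2π, γ < α+β+δ < γ+2π, and δ < α+β+γ < δ+2π. Then the closed intervals [|α−β|, min(α+β, 2π−α−β)] and [|γ−δ|, min(γ+δ, 2π−γ−δ)] have nonempty intersection. -/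
open Real

/-!
Two closed intervals meet as soon as each lower endpoint is at most each upper endpoint. For the
intervals of lengths completing `a, b`, respectively `c, d`, to a spherical triangle, comparing
the lower endpoint of one with the upper endpoint of the other gives half of the quadrilateral
inequalities for `a, b, c, d`. Comparing the endpoints of a single interval gives the same
inequalities for the degenerate quadrilateral `a, b, a, b`.
-/

theorem nonempty_Icc_inter_Icc_iff {L : Type*} [Lattice L] {a₁ b₁ a₂ b₂ : L} :
    (Set.Icc a₁ b₁ ∩ Set.Icc a₂ b₂).Nonempty ↔ (a₁ ≤ b₁ ∧ a₁ ≤ b₂) ∧ a₂ ≤ b₁ ∧ a₂ ≤ b₂ := by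
  rw [Set.Icc_inter_Icc, Set.nonempty_Icc, sup_le_iff, le_inf_iff, le_inf_iff]

section LinearOrderedGroup

variable {G : Type*} [AddCommGroup G] [LinearOrder G] [IsOrderedAddMonoid G] {a b c d s : G}

theorem abs_sub_le_min_add_sub_sub_iff :
    |a - b| ≤ min (c + d) (s - c - d) ↔
      (a ≤ b + c + d ∧ b ≤ a + c + d) ∧ a + c + d ≤ b + s ∧ b + c + d ≤ a + s := by
  have le_add_iff (x y : G) : x - y ≤ c + d ↔ x ≤ y + c + d := by
    rw [sub_le_iff_le_add', add_assoc]
  have le_sub_iff (x y : G) : x - y ≤ s - c - d ↔ x + c + d ≤ y + s := by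
    rw [sub_sub, sub_le_iff_le_add', ← add_sub_assoc, le_sub_iff_add_le, add_assoc]
  simp only [le_min_iff, abs_sub_le_iff, le_add_iff, le_sub_iff]

theorem abs_sub_le_min_add_sub_sub_self (ha : 0 ≤ a) (hb : 0 ≤ b) (has : a + a ≤ s)
    (hbs : b + b ≤ s) : |a - b| ≤ min (a + b) (s - a - b) := by
  rw [abs_sub_le_min_add_sub_sub_iff]
  exact ⟨⟨by grind, by grind⟩, by grind, by grind⟩

/-- `s` plays the role of the length of a great circle. -/
theorem intervals_intersect_general
    (ha : 0 ≤ a) (has : a + a ≤ s) (hb : 0 ≤ b) (hbs : b + b ≤ s)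
    (hc : 0 ≤ c) (hcs : c + c ≤ s) (hd : 0 ≤ d) (hds : d + d ≤ s)
    (ha_lower : a ≤ b + c + d) (ha_upper : b + c + d ≤ a + s)
    (hb_lower : b ≤ a + c + d) (hb_upper : a + c + d ≤ b + s)
    (hc_lower : c ≤ a + b + d) (hc_upper : a + b + d ≤ c + s)
    (hd_lower : d ≤ a + b + c) (hd_upper : a + b + c ≤ d + s) :
    (Set.Icc |a - b| (min (a + b) (s - a - b)) ∩
      Set.Icc |c - d| (min (c + d) (s - c - d))).Nonempty := by
  have hab_cd : |a - b| ≤ min (c + d) (s - c - d) :=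
    abs_sub_le_min_add_sub_sub_iff.2 ⟨⟨ha_lower, hb_lower⟩, hb_upper, ha_upper⟩
  have hcd_ab : |c - d| ≤ min (a + b) (s - a - b) := by
    rw [abs_sub_le_min_add_sub_sub_iff, add_rotate d a b, add_rotate c a b]
    exact ⟨⟨hc_lower, hd_lower⟩, hd_upper, hc_upper⟩
  exact nonempty_Icc_inter_Icc_iff.2
    ⟨⟨abs_sub_le_min_add_sub_sub_self ha hb has hbs, hab_cd⟩,
      hcd_ab, abs_sub_le_min_add_sub_sub_self hc hd hcs hds⟩

end LinearOrderedGroup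

theorem intervals_intersect (α β γ δ : ℝ)
    (hα : 0 < α) (hα' : α < π) (hβ : 0 < β) (hβ' : β < π)
    (hγ : 0 < γ) (hγ' : γ < π) (hδ : 0 < δ) (hδ' : δ < π)
    (h1 : α < β + γ + δ) (h1' : β + γ + δ < α + 2 * π)
    (h2 : β < α + γ + δ) (h2' : α + γ + δ < β + 2 * π)
    (h3 : γ < α + β + δ) (h3' : α + β + δ < γ + 2 * π)
    (h4 : δ < α + β + γ) (h4' : α + β + γ < δ + 2 * π) :
    (Set.Icc |α - β| (min (α + β) (2 * π - α - β)) ∩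
      Set.Icc |γ - δ| (min (γ + δ) (2 * π - γ - δ))).Nonempty :=
  intervals_intersect_general hα.le (by linarith) hβ.le (by linarith) hγ.le (by linarith)
    hδ.le (by linarith) h1.le h1'.le h2.le h2'.le h3.le h3'.le h4.le h4'.le
end

section
/- Let α, β, γ, δ be real numbers with 0 < α, β, γ, δ < π satisfying α < β+γ+δ < α+2π, β < α+γ+δ < β+2π, γ < α+β+δ < γ+2π, and δ < α+β+γ < δ+2π. Then there exist unit vectors v₁, v₂, v₃, v₄ in three-dimensional Euclidean space ℝ³ such that ⟨v₁,v₂⟩ = cos α, ⟨v₂,v₃⟩ = cos β, ⟨v₃,v₄⟩ = cos γ, and ⟨v₄,v₁⟩ = cos δ. -/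
open Real
open scoped RealInnerProductSpace

/-!
Cut the quadrilateral along the diagonal `v₁v₃`. Its two halves are spherical triangles with sides
`α, β, x` and `δ, γ, x`, and the conditions on the four sides guarantee that some diagonal length
`x` meets the triangle inequalities of both. Put `v₁` at the north pole and `v₃` at colatitude `x`.
In polar coordinates the colatitudes of `v₂` and `v₄` are then `α` and `δ`, and the law of cosines
turns each remaining side into an equation for one longitude, solvable by the intermediate value
theorem.
-/

/-- The inequalities characterising the side lengths of a possibly degenerate triangle on the unit
sphere: the three triangle inequalities and the bound `2π` on the perimeter. Together they force
each side into `[0, π]`. -/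
structure SphericalTriangleIneq (a b c : ℝ) : Prop where
  left_le : a ≤ b + c
  middle_le : b ≤ a + c
  right_le : c ≤ a + b
  perimeter_le : a + b + c ≤ 2 * π

theorem cos_le_cos_of_le_of_add_le_two_pi {x y : ℝ} (hx : 0 ≤ x) (hxy : x ≤ y)
    (hsum : x + y ≤ 2 * π) : cos y ≤ cos x := by
  rcases le_total y π with hy | hy
  · exact cos_le_cos_of_nonneg_of_le_pi hx hy hxy
  · rw [← cos_two_pi_sub y]
    exact cos_le_cos_of_nonneg_of_le_pi hx (by linarith) (by linarith)

theorem SphericalTriangleIneq.exists_law_of_cosines {a b c : ℝ} (h : SphericalTriangleIneq a b c) :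
    ∃ θ, cos a * cos b + sin a * sin b * cos θ = cos c := by
  obtain ⟨hac, hbc, hcab, hperim⟩ := h
  have cos_add_le : cos (a + b) ≤ cos c :=
    cos_le_cos_of_le_of_add_le_two_pi (by linarith) hcab (by linarith)
  have le_cos_sub : cos c ≤ cos (a - b) := by
    rw [← cos_abs (a - b)]
    exact cos_le_cos_of_nonneg_of_le_pi (abs_nonneg _) (by linarith)
      (abs_sub_le_iff.2 ⟨by linarith, by linarith⟩)
  obtain ⟨θ, -, hθ⟩ : cos c ∈ (fun θ ↦ cos a * cos b + sin a * sin b * cos θ) '' Set.Icc 0 π := by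
    refine intermediate_value_Icc' pi_pos.le (by fun_prop) ⟨?_, ?_⟩
    · simpa only [cos_pi, mul_neg_one, ← sub_eq_add_neg, ← cos_add] using cos_add_le
    · simpa only [cos_zero, mul_one, ← cos_sub] using le_cos_sub
  exact ⟨θ, hθ⟩

theorem exists_diagonal_sphericalTriangleIneq {α β γ δ : ℝ}
    (hα : α ∈ Set.Icc 0 π) (hβ : β ∈ Set.Icc 0 π) (hγ : γ ∈ Set.Icc 0 π) (hδ : δ ∈ Set.Icc 0 π)
    (h1 : α ≤ β + γ + δ) (h1' : β + γ + δ ≤ α + 2 * π)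
    (h2 : β ≤ α + γ + δ) (h2' : α + γ + δ ≤ β + 2 * π)
    (h3 : γ ≤ α + β + δ) (h3' : α + β + δ ≤ γ + 2 * π)
    (h4 : δ ≤ α + β + γ) (h4' : α + β + γ ≤ δ + 2 * π) :
    ∃ x, SphericalTriangleIneq α x β ∧ SphericalTriangleIneq x δ γ := by
  rw [Set.mem_Icc] at hα hβ hγ hδ
  -- The least `x` allowed by the inequalities that bound it from below.
  let x := max |α - β| |γ - δ|
  have x_le {s : ℝ} (hαβ : α - β ≤ s) (hβα : β - α ≤ s) (hγδ : γ - δ ≤ s) (hδγ : δ - γ ≤ s) :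
      x ≤ s :=
    max_le (abs_sub_le_iff.2 ⟨hαβ, hβα⟩) (abs_sub_le_iff.2 ⟨hγδ, hδγ⟩)
  obtain ⟨hαβ, hβα⟩ := abs_sub_le_iff.1 (le_max_left _ _ : |α - β| ≤ x)
  obtain ⟨hγδ, hδγ⟩ := abs_sub_le_iff.1 (le_max_right _ _ : |γ - δ| ≤ x)
  have x_le_add_αβ : x ≤ α + β := by apply x_le <;> linarith
  have x_le_add_γδ : x ≤ γ + δ := by apply x_le <;> linarith
  have x_le_sub_αβ : x ≤ 2 * π - α - β := by apply x_le <;> linarith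
  have x_le_sub_γδ : x ≤ 2 * π - γ - δ := by apply x_le <;> linarith
  exact ⟨x, ⟨by linarith, by linarith, by linarith, by linarith⟩,
    ⟨by linarith, by linarith, by linarith, by linarith⟩⟩

section PolarPoint

variable {E : Type*} [NormedAddCommGroup E] [InnerProductSpace ℝ E] {e : Fin 3 → E}

/-- The point of the unit sphere with colatitude `r` and longitude `θ`, in polar coordinates with
respect to a frame `e` (intended to be orthonormal) whose vector `e 0` is the north pole and whose
vector `e 1` lies on the meridian `θ = 0`. -/
noncomputable def polarPoint (e : Fin 3 → E) (r θ : ℝ) : E :=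
  cos r • e 0 + (sin r * cos θ) • e 1 + (sin r * sin θ) • e 2

theorem inner_polarPoint (he : Orthonormal ℝ e) (r θ s φ : ℝ) :
    ⟪polarPoint e r θ, polarPoint e s φ⟫ = cos r * cos s + sin r * sin s * cos (θ - φ) := by
  simp only [polarPoint, inner_add_left, inner_add_right, real_inner_smul_left,
    real_inner_smul_right, orthonormal_iff_ite.1 he, Fin.reduceEq, if_true, if_false, cos_sub]
  ring

theorem norm_polarPoint (he : Orthonormal ℝ e) (r θ : ℝ) : ‖polarPoint e r θ‖ = 1 := by
  rw [norm_eq_sqrt_real_inner, inner_polarPoint he, sub_self, cos_zero, mul_one, ← cos_sub,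
    sub_self, cos_zero, sqrt_one]

end PolarPoint

theorem exists_orthonormal_fin_of_le_rank {𝕜 E : Type*} [RCLike 𝕜] [NormedAddCommGroup E]
    [InnerProductSpace 𝕜 E] {n : ℕ} (hn : n ≤ Module.rank 𝕜 E) :
    ∃ e : Fin n → E, Orthonormal 𝕜 e :=
  let ⟨_, hv⟩ := Module.le_rank_iff.1 hn
  ⟨_, InnerProductSpace.gramSchmidtNormed_orthonormal hv⟩

theorem spherical_quadrilateral_exists_general {E : Type*} [NormedAddCommGroup E]
    [InnerProductSpace ℝ E] (hE : 3 ≤ Module.rank ℝ E) {α β γ δ : ℝ}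
    (hα : α ∈ Set.Icc 0 π) (hβ : β ∈ Set.Icc 0 π) (hγ : γ ∈ Set.Icc 0 π) (hδ : δ ∈ Set.Icc 0 π)
    (h1 : α ≤ β + γ + δ) (h1' : β + γ + δ ≤ α + 2 * π)
    (h2 : β ≤ α + γ + δ) (h2' : α + γ + δ ≤ β + 2 * π)
    (h3 : γ ≤ α + β + δ) (h3' : α + β + δ ≤ γ + 2 * π)
    (h4 : δ ≤ α + β + γ) (h4' : α + β + γ ≤ δ + 2 * π) :
    ∃ v₁ v₂ v₃ v₄ : E,
      ‖v₁‖ = 1 ∧ ‖v₂‖ = 1 ∧ ‖v₃‖ = 1 ∧ ‖v₄‖ = 1 ∧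
      ⟪v₁, v₂⟫ = cos α ∧ ⟪v₂, v₃⟫ = cos β ∧ ⟪v₃, v₄⟫ = cos γ ∧ ⟪v₄, v₁⟫ = cos δ := by
  obtain ⟨e, he⟩ := exists_orthonormal_fin_of_le_rank (n := 3) hE
  obtain ⟨x, triangle₂, triangle₄⟩ :=
    exists_diagonal_sphericalTriangleIneq hα hβ hγ hδ h1 h1' h2 h2' h3 h3' h4 h4'
  obtain ⟨θ, hθ⟩ := triangle₂.exists_law_of_cosines
  obtain ⟨φ, hφ⟩ := triangle₄.exists_law_of_cosines
  refine ⟨polarPoint e 0 0, polarPoint e α θ, polarPoint e x 0, polarPoint e δ φ,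
    norm_polarPoint he _ _, norm_polarPoint he _ _, norm_polarPoint he _ _,
    norm_polarPoint he _ _, ?_, ?_, ?_, ?_⟩ <;> rw [inner_polarPoint he]
  · simp
  · simpa using hθ
  · simpa using hφ
  · simp

theorem spherical_quadrilateral_exists (α β γ δ : ℝ)
    (hα : 0 < α) (hα' : α < π) (hβ : 0 < β) (hβ' : β < π)
    (hγ : 0 < γ) (hγ' : γ < π) (hδ : 0 < δ) (hδ' : δ < π)
    (h1 : α < β + γ + δ) (h1' : β + γ + δ < α + 2 * π)
    (h2 : β < α + γ + δ) (h2' : α + γ + δ < β + 2 * π)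
    (h3 : γ < α + β + δ) (h3' : α + β + δ < γ + 2 * π)
    (h4 : δ < α + β + γ) (h4' : α + β + γ < δ + 2 * π) :
    ∃ v₁ v₂ v₃ v₄ : EuclideanSpace ℝ (Fin 3),
      ‖v₁‖ = 1 ∧ ‖v₂‖ = 1 ∧ ‖v₃‖ = 1 ∧ ‖v₄‖ = 1 ∧
      ⟪v₁, v₂⟫ = Real.cos α ∧ ⟪v₂, v₃⟫ = Real.cos β ∧
      ⟪v₃, v₄⟫ = Real.cos γ ∧ ⟪v₄, v₁⟫ = Real.cos δ := by
  exact spherical_quadrilateral_exists_general (by simp [← Module.finrank_eq_rank])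
    ⟨hα.le, hα'.le⟩ ⟨hβ.le, hβ'.le⟩ ⟨hγ.le, hγ'.le⟩ ⟨hδ.le, hδ'.le⟩
    h1.le h1'.le h2.le h2'.le h3.le h3'.le h4.le h4'.le
end

section
/- For real numbers α, β, γ, δ define the coefficients c₂₂(α,β,γ,δ) = sin((α+β+γ−δ)/2)·sin((α−β+γ−δ)/2), c₂₀(α,β,γ,δ) = sin((α−β−γ−δ)/2)·sin((α+β−γ−δ)/2), c₀₂(α,β,γ,δ) = sin((α+β−γ+δ)/2)·sin((α−β−γ+δ)/2), c₁₁(α,β,γ,δ) = −sin α · sin γ, c₀₀(α,β,γ,δ) = sin((α−β+γ+δ)/2)·sin((α+β+γ+δ)/2). Let z, w be complex numbers with z ≠ 0. Then c₂₂ z²w² + c₂₀ z² + c₀₂ w² + 2c₁₁ zw + c₀₀ = 0 (coefficients taken at (α,β,γ,δ)) holds if and only if c₂₂' z'²w² + c₂₀' z'² + c₀₂' w² + 2c₁₁' z'w + c₀₀' = 0 holds, where z' = −1/z and the primed coefficients are taken at (π−α, π−β, γ, δ). -/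
open Real

noncomputable def c22 (α β γ δ : ℝ) : ℝ := sin ((α + β + γ - δ) / 2) * sin ((α - β + γ - δ) / 2)
noncomputable def c20 (α β γ δ : ℝ) : ℝ := sin ((α - β - γ - δ) / 2) * sin ((α + β - γ - δ) / 2)
noncomputable def c02 (α β γ δ : ℝ) : ℝ := sin ((α + β - γ + δ) / 2) * sin ((α - β - γ + δ) / 2)
noncomputable def c11 (α β γ δ : ℝ) : ℝ := -(sin α * sin γ)
noncomputable def c00 (α β γ δ : ℝ) : ℝ := sin ((α - β + γ + δ) / 2) * sin ((α + β + γ + δ) / 2)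

/-!
Replacing `(α, β)` by `(π - α, π - β)` turns each half-sum `(α + β ± …) / 2` into `π` minus a
half-sum and each half-difference `(α - β ± …) / 2` into the negative of one. Hence it exchanges
`c22` with `-c02` and `c20` with `-c00`, and fixes `c11`. This is the effect on the coefficients of
substituting `z' = -z⁻¹` and clearing denominators, up to an overall sign.
-/

section Coefficients

variable (α β γ δ : ℝ)

theorem c22_pi_sub_pi_sub : c22 (π - α) (π - β) γ δ = -c02 α β γ δ := by
  have half_sum : (π - α + (π - β) + γ - δ) / 2 = π - (α + β - γ + δ) / 2 := by ring
  have half_diff : (π - α - (π - β) + γ - δ) / 2 = -((α - β - γ + δ) / 2) := by ring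
  rw [c22, c02, half_sum, half_diff, sin_pi_sub, sin_neg, mul_neg]

theorem c20_pi_sub_pi_sub : c20 (π - α) (π - β) γ δ = -c00 α β γ δ := by
  have half_sum : (π - α + (π - β) - γ - δ) / 2 = π - (α + β + γ + δ) / 2 := by ring
  have half_diff : (π - α - (π - β) - γ - δ) / 2 = -((α - β + γ + δ) / 2) := by ring
  rw [c20, c00, half_sum, half_diff, sin_pi_sub, sin_neg, neg_mul]

theorem c02_pi_sub_pi_sub : c02 (π - α) (π - β) γ δ = -c22 α β γ δ := by
  rw [← neg_eq_iff_eq_neg, eq_comm]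
  simpa only [sub_sub_cancel] using c22_pi_sub_pi_sub (π - α) (π - β) γ δ

theorem c00_pi_sub_pi_sub : c00 (π - α) (π - β) γ δ = -c20 α β γ δ := by
  rw [← neg_eq_iff_eq_neg, eq_comm]
  simpa only [sub_sub_cancel] using c20_pi_sub_pi_sub (π - α) (π - β) γ δ

theorem c11_pi_sub_pi_sub : c11 (π - α) (π - β) γ δ = c11 α β γ δ := by
  rw [c11, c11, sin_pi_sub]

end Coefficients

section Polynomial

variable {R : Type*} [CommRing R] [Algebra ℝ R]

/-- The polynomial in the half-angle tangents `z`, `w` whose zero set is the affine configuration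
space `Z(α, β, γ, δ)` of spherical quadrilaterals. The tangents may lie in any commutative
`ℝ`-algebra, such as `ℝ` or `ℂ`. -/
noncomputable def quadrilateralPoly (α β γ δ : ℝ) (z w : R) : R :=
  algebraMap ℝ R (c22 α β γ δ) * z ^ 2 * w ^ 2 + algebraMap ℝ R (c20 α β γ δ) * z ^ 2 +
    algebraMap ℝ R (c02 α β γ δ) * w ^ 2 + 2 * algebraMap ℝ R (c11 α β γ δ) * z * w +
    algebraMap ℝ R (c00 α β γ δ)

theorem quadrilateralPoly_pi_sub_pi_sub (α β γ δ : ℝ) {z z' : R} (w : R) (hzz' : z * z' = -1) :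
    quadrilateralPoly (π - α) (π - β) γ δ z' w = -z' ^ 2 * quadrilateralPoly α β γ δ z w := by
  simp only [quadrilateralPoly, c22_pi_sub_pi_sub, c20_pi_sub_pi_sub, c02_pi_sub_pi_sub,
    c11_pi_sub_pi_sub, c00_pi_sub_pi_sub, map_neg]
  linear_combination
    ((algebraMap ℝ R (c22 α β γ δ) * w ^ 2 + algebraMap ℝ R (c20 α β γ δ)) * (z * z' - 1) +
      2 * algebraMap ℝ R (c11 α β γ δ) * z' * w) * hzz'

theorem switching_isomorphism_general (α β γ δ : ℝ) {z z' : R} (w : R) (hzz' : z * z' = -1) :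
    quadrilateralPoly α β γ δ z w = 0 ↔ quadrilateralPoly (π - α) (π - β) γ δ z' w = 0 := by
  have switch := quadrilateralPoly_pi_sub_pi_sub α β γ δ w hzz'
  have switch_back :=
    quadrilateralPoly_pi_sub_pi_sub (π - α) (π - β) γ δ w ((mul_comm z' z).trans hzz')
  rw [sub_sub_cancel, sub_sub_cancel] at switch_back
  exact ⟨fun hz => by rw [switch, hz, mul_zero], fun hz' => by rw [switch_back, hz', mul_zero]⟩

end Polynomial

theorem switching_isomorphism (α β γ δ : ℝ) (z w : ℂ) (hz : z ≠ 0) :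
    ((c22 α β γ δ : ℂ) * z ^ 2 * w ^ 2 + (c20 α β γ δ : ℂ) * z ^ 2 +
        (c02 α β γ δ : ℂ) * w ^ 2 + 2 * (c11 α β γ δ : ℂ) * z * w + (c00 α β γ δ : ℂ) = 0) ↔
      ((c22 (π - α) (π - β) γ δ : ℂ) * (-z⁻¹) ^ 2 * w ^ 2 +
        (c20 (π - α) (π - β) γ δ : ℂ) * (-z⁻¹) ^ 2 +
        (c02 (π - α) (π - β) γ δ : ℂ) * w ^ 2 +
        2 * (c11 (π - α) (π - β) γ δ : ℂ) * (-z⁻¹) * w +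
        (c00 (π - α) (π - β) γ δ : ℂ) = 0) := by
  exact switching_isomorphism_general α β γ δ w (by rw [mul_neg, mul_inv_cancel₀ hz])
end

section
/- Let a, b, c, p, r be complex numbers with a ≠ 0, b ≠ 0, c ≠ 0, and suppose r² = −c/a and p·r = i·c/b (where i is the imaginary unit). Then the affine algebraic curve {(z,w) ∈ ℂ² : a·w² + 2b·z·w + c = 0} is exactly the set {(p·sin t, r·exp(i·t)) : t ∈ ℂ}, where sin and exp are the complex sine and exponential functions. In particular p² = a·c/b². -/
/-!
The relations `a r² = -c` and `b p r = i c` are exactly what makes the left-hand side of the curve's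
equation factor at `w = r exp (i t)` as `2 b w (z - p sin t)`. Since `c ≠ 0`, no point of the curve
has `w = 0`, so every `w` that occurs is of the form `r exp (i t)`, and the factorization then says
that `z = p sin t` is the only point of the curve above it.
-/

open Complex (I)

theorem two_mul_sin_mul_exp_I_mul (t : ℂ) :
    2 * Complex.sin t * Complex.exp (I * t) = I * (1 - Complex.exp (I * t) ^ 2) := by
  have exp_neg_mul_exp : Complex.exp (-(I * t)) * Complex.exp (I * t) = 1 := by
    rw [← Complex.exp_add, neg_add_cancel, Complex.exp_zero]
  rw [Complex.two_sin, neg_mul, mul_comm t I]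
  linear_combination I * exp_neg_mul_exp

theorem exists_exp_I_mul_eq {u : ℂ} (hu : u ≠ 0) : ∃ t : ℂ, Complex.exp (I * t) = u :=
  ⟨-I * Complex.log u, by
    rw [← mul_assoc, mul_neg, Complex.I_mul_I, neg_neg, one_mul, Complex.exp_log hu]⟩

theorem exists_eq_mul_exp_I_mul {r w : ℂ} (hr : r ≠ 0) (hw : w ≠ 0) :
    ∃ t : ℂ, w = r * Complex.exp (I * t) := by
  obtain ⟨t, ht⟩ := exists_exp_I_mul_eq (div_ne_zero hw hr)
  exact ⟨t, by rw [ht, mul_div_cancel₀ w hr]⟩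

section Curve

variable {a b c p r : ℂ}

theorem curve_at_mul_exp_eq_mul_sub_sin (har : a * r ^ 2 = -c) (hbpr : b * (p * r) = I * c)
    (z t : ℂ) :
    a * (r * Complex.exp (I * t)) ^ 2 + 2 * b * z * (r * Complex.exp (I * t)) + c =
      2 * b * (r * Complex.exp (I * t)) * (z - p * Complex.sin t) := by
  linear_combination Complex.exp (I * t) ^ 2 * har
    + 2 * Complex.sin t * Complex.exp (I * t) * hbpr
    + I * c * two_mul_sin_mul_exp_I_mul t
    + c * (1 - Complex.exp (I * t) ^ 2) * Complex.I_sq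

theorem curve_at_mul_exp_eq_zero_iff (hb : b ≠ 0) (hr : r ≠ 0) (har : a * r ^ 2 = -c)
    (hbpr : b * (p * r) = I * c) (z t : ℂ) :
    a * (r * Complex.exp (I * t)) ^ 2 + 2 * b * z * (r * Complex.exp (I * t)) + c = 0 ↔
      z = p * Complex.sin t := by
  have leading_ne_zero : 2 * b * (r * Complex.exp (I * t)) ≠ 0 :=
    mul_ne_zero (mul_ne_zero two_ne_zero hb) (mul_ne_zero hr (Complex.exp_ne_zero _))
  rw [curve_at_mul_exp_eq_mul_sub_sin har hbpr, mul_eq_zero_iff_left leading_ne_zero, sub_eq_zero]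

theorem curve_eq_zero_iff_exists_sin_exp (hb : b ≠ 0) (hc : c ≠ 0) (har : a * r ^ 2 = -c)
    (hbpr : b * (p * r) = I * c) (z w : ℂ) :
    a * w ^ 2 + 2 * b * z * w + c = 0 ↔
      ∃ t : ℂ, z = p * Complex.sin t ∧ w = r * Complex.exp (I * t) := by
  have hr : r ≠ 0 := by
    rintro rfl
    exact hc (by linear_combination har)
  constructor
  · intro hzw
    have hw : w ≠ 0 := by
      rintro rfl
      exact hc (by linear_combination hzw)
    obtain ⟨t, rfl⟩ := exists_eq_mul_exp_I_mul hr hw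
    exact ⟨t, (curve_at_mul_exp_eq_zero_iff hb hr har hbpr z t).mp hzw, rfl⟩
  · rintro ⟨t, hz, rfl⟩
    exact (curve_at_mul_exp_eq_zero_iff hb hr har hbpr z t).mpr hz

end Curve

theorem sq_mul_sq_eq_mul_of_sq_eq_neg_one {R : Type*} [CommRing R] [NoZeroDivisors R]
    {i a b c p r : R} (hi : i ^ 2 = -1) (hc : c ≠ 0) (har : a * r ^ 2 = -c)
    (hbpr : b * (p * r) = i * c) : p ^ 2 * b ^ 2 = a * c := by
  have squared : b ^ 2 * p ^ 2 * r ^ 2 = -c ^ 2 := by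
    linear_combination (b * (p * r) + i * c) * hbpr + c ^ 2 * hi
  apply mul_right_cancel₀ hc
  calc p ^ 2 * b ^ 2 * c = -a * (b ^ 2 * p ^ 2 * r ^ 2) := by
        linear_combination p ^ 2 * b ^ 2 * har
    _ = a * c * c := by rw [squared]; ring

theorem deltoid_parametrization (a b c p r : ℂ)
    (ha : a ≠ 0) (hb : b ≠ 0) (hc : c ≠ 0)
    (hr : r ^ 2 = -c / a) (hpr : p * r = Complex.I * c / b) :
    ({zw : ℂ × ℂ | a * zw.2 ^ 2 + 2 * b * zw.1 * zw.2 + c = 0} =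
      {zw : ℂ × ℂ | ∃ t : ℂ, zw = (p * Complex.sin t, r * Complex.exp (Complex.I * t))}) ∧
    p ^ 2 = a * c / b ^ 2 := by
  have har : a * r ^ 2 = -c := by rw [hr, mul_div_cancel₀ _ ha]
  have hbpr : b * (p * r) = I * c := by rw [hpr, mul_div_cancel₀ _ hb]
  constructor
  · ext ⟨z, w⟩
    simpa only [Set.mem_ofPred_eq, Prod.mk.injEq] using
      curve_eq_zero_iff_exists_sin_exp hb hc har hbpr z w
  · rw [eq_div_iff (pow_ne_zero 2 hb)]
    exact sq_mul_sq_eq_mul_of_sq_eq_neg_one Complex.I_sq hc har hbpr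
end

section
/- Let c₂₀, c₀₂, c₁₁, c₀₀ be complex numbers with c₂₀ ≠ 0, c₀₂ ≠ 0, c₀₀ ≠ 0, and Δ := c₁₁² − c₂₀·c₀₂ ≠ 0. Let p, q, t₀ be complex numbers satisfying p²·Δ = c₀₂·c₀₀, q²·Δ = c₂₀·c₀₀, and p·q·Δ·cos t₀ = −c₁₁·c₀₀. Then the affine algebraic curve {(z,w) ∈ ℂ² : c₂₀·z² + c₀₂·w² + 2c₁₁·z·w + c₀₀ = 0} equals the set {(p·sin t, q·sin(t+t₀)) : t ∈ ℂ}, where sin and cos are the complex sine and cosine. -/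
/-!
In the coordinates `z = p x`, `w = q y`, the relations on `p`, `q`, `t₀` turn the conic into
`x² + y² - 2 x y cos t₀ = sin² t₀`. The complex sine is surjective, so `x = sin t` for some `t`,
and the equation is then quadratic in `y` with roots `sin (t + t₀)` and `sin (t - t₀)`. The
second root is brought to the form of the first by replacing `t` with `π - t`, which leaves `x`
unchanged.
-/

section NormalForm

variable {R : Type*} [CommRing R] {c20 c02 c11 c00 p q C D : R}

lemma sq_mul_amplitudes (hp : p ^ 2 * D = c02 * c00) (hq : q ^ 2 * D = c20 * c00) :
    (p * q * D) ^ 2 = c20 * c02 * c00 ^ 2 := by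
  linear_combination q ^ 2 * D * hp + c02 * c00 * hq

variable [IsDomain R]

lemma mul_sq_phase_eq_sq (h00 : c00 ≠ 0) (hp : p ^ 2 * D = c02 * c00)
    (hq : q ^ 2 * D = c20 * c00) (hC : p * q * D * C = -(c11 * c00)) :
    c20 * c02 * C ^ 2 = c11 ^ 2 := by
  apply mul_left_cancel₀ (pow_ne_zero 2 h00)
  linear_combination -C ^ 2 * sq_mul_amplitudes hp hq + (p * q * D * C - c11 * c00) * hC

lemma cross_coeff_mul_amplitudes (h00 : c00 ≠ 0) (hp : p ^ 2 * D = c02 * c00)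
    (hq : q ^ 2 * D = c20 * c00) (hC : p * q * D * C = -(c11 * c00)) :
    c11 * (p * q) * D = -(c20 * c02 * c00 * C) := by
  apply mul_left_cancel₀ h00
  linear_combination p * q * D * hC - C * sq_mul_amplitudes hp hq

lemma discrim_mul_rescaled_conic (h00 : c00 ≠ 0)
    (hp : p ^ 2 * (c11 ^ 2 - c20 * c02) = c02 * c00)
    (hq : q ^ 2 * (c11 ^ 2 - c20 * c02) = c20 * c00)
    (hC : p * q * (c11 ^ 2 - c20 * c02) * C = -(c11 * c00)) (x y : R) :
    (c11 ^ 2 - c20 * c02) *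
        (c20 * (p * x) ^ 2 + c02 * (q * y) ^ 2 + 2 * c11 * (p * x) * (q * y) + c00) =
      c20 * c02 * c00 * (x ^ 2 + y ^ 2 - 2 * C * x * y - (1 - C ^ 2)) := by
  linear_combination c20 * x ^ 2 * hp + c02 * y ^ 2 * hq
    + 2 * x * y * cross_coeff_mul_amplitudes h00 hp hq hC
    - c00 * mul_sq_phase_eq_sq h00 hp hq hC

lemma rescaled_conic_eq_zero_iff (h20 : c20 ≠ 0) (h02 : c02 ≠ 0) (h00 : c00 ≠ 0)
    (hp : p ^ 2 * (c11 ^ 2 - c20 * c02) = c02 * c00)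
    (hq : q ^ 2 * (c11 ^ 2 - c20 * c02) = c20 * c00)
    (hC : p * q * (c11 ^ 2 - c20 * c02) * C = -(c11 * c00)) (x y : R) :
    c20 * (p * x) ^ 2 + c02 * (q * y) ^ 2 + 2 * c11 * (p * x) * (q * y) + c00 = 0 ↔
      x ^ 2 + y ^ 2 - 2 * C * x * y = 1 - C ^ 2 := by
  have discrim_ne_zero : c11 ^ 2 - c20 * c02 ≠ 0 :=
    right_ne_zero_of_mul (hp ▸ mul_ne_zero h02 h00)
  have factor_ne_zero : c20 * c02 * c00 ≠ 0 := mul_ne_zero (mul_ne_zero h20 h02) h00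
  rw [← mul_eq_zero_iff_left discrim_ne_zero, discrim_mul_rescaled_conic h00 hp hq hC,
    mul_eq_zero_iff_left factor_ne_zero, sub_eq_zero]

end NormalForm

section Trigonometric

open Complex

lemma sub_sin_add_mul_sub_sin_sub (s t y : ℂ) :
    (y - sin (t + s)) * (y - sin (t - s)) =
      sin t ^ 2 + y ^ 2 - 2 * cos s * sin t * y - (1 - cos s ^ 2) := by
  rw [sin_add, sin_sub]
  linear_combination -cos t ^ 2 * sin_sq_add_cos_sq s
    - (1 - cos s ^ 2) * sin_sq_add_cos_sq t

lemma sq_add_sq_sub_two_cos_mul_eq_iff_exists_sin (s x y : ℂ) :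
    x ^ 2 + y ^ 2 - 2 * cos s * x * y = 1 - cos s ^ 2 ↔
      ∃ t, x = sin t ∧ y = sin (t + s) := by
  constructor
  · intro h
    obtain ⟨t, rfl⟩ := sin_surjective x
    rw [← sub_eq_zero, ← sub_sin_add_mul_sub_sin_sub, mul_eq_zero, sub_eq_zero, sub_eq_zero] at h
    rcases h with hy | hy
    · exact ⟨t, rfl, hy⟩
    · refine ⟨Real.pi - t, (sin_pi_sub t).symm, ?_⟩
      rw [hy, ← sin_pi_sub, sub_sub_eq_add_sub, sub_add_eq_add_sub]
  · rintro ⟨t, rfl, rfl⟩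
    rw [← sub_eq_zero, ← sub_sin_add_mul_sub_sin_sub, sub_self, zero_mul]

end Trigonometric

theorem conic_parametrization (c20 c02 c11 c00 p q t₀ : ℂ)
    (h20 : c20 ≠ 0) (h02 : c02 ≠ 0) (h00 : c00 ≠ 0)
    (hΔ : c11 ^ 2 - c20 * c02 ≠ 0)
    (hp : p ^ 2 * (c11 ^ 2 - c20 * c02) = c02 * c00)
    (hq : q ^ 2 * (c11 ^ 2 - c20 * c02) = c20 * c00)
    (ht : p * q * (c11 ^ 2 - c20 * c02) * Complex.cos t₀ = -(c11 * c00)) :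
    {zw : ℂ × ℂ | c20 * zw.1 ^ 2 + c02 * zw.2 ^ 2 + 2 * c11 * zw.1 * zw.2 + c00 = 0} =
      {zw : ℂ × ℂ | ∃ t : ℂ, zw = (p * Complex.sin t, q * Complex.sin (t + t₀))} := by
  have hp0 : p ≠ 0 := ne_zero_pow two_ne_zero (left_ne_zero_of_mul (hp ▸ mul_ne_zero h02 h00))
  have hq0 : q ≠ 0 := ne_zero_pow two_ne_zero (left_ne_zero_of_mul (hq ▸ mul_ne_zero h20 h00))
  ext ⟨z, w⟩
  obtain ⟨x, rfl⟩ := mul_left_surjective₀ hp0 z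
  obtain ⟨y, rfl⟩ := mul_left_surjective₀ hq0 w
  simp only [Set.mem_ofPred_eq, Prod.mk.injEq, mul_right_inj' hp0, mul_right_inj' hq0]
  rw [rescaled_conic_eq_zero_iff h20 h02 h00 hp hq ht,
    sq_add_sq_sub_two_cos_mul_eq_iff_exists_sin]
end

section
/- Let α, β, γ, δ be real numbers with α + γ = β + δ and sin α ≠ 0, sin β ≠ 0, sin γ ≠ 0, sin δ ≠ 0, sin(δ−α) ≠ 0, sin(δ−γ) ≠ 0, and sin(α+γ) ≠ 0. Let p, q, t₀ be complex numbers satisfying p² = sin α · sin δ/(sin β · sin γ) − 1, q² = sin γ · sin δ/(sin α · sin β) − 1, and p·q·sin β·cos t₀ = sin(α+γ). Then the affine algebraic curve {(z,w) ∈ ℂ² : sin γ · sin(δ−α) · z² + sin α · sin(δ−γ) · w² − 2 sin α · sin γ · z·w + sin(α+γ) · sin δ = 0} equals the set {(p·sin t, q·sin(t+t₀)) : t ∈ ℂ}. -/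
open Real

/-!
With `σ = α + γ = β + δ`, Ptolemy's identity for sines gives
`p² = sin σ sin (δ - γ) / (sin β sin γ)`, `q² = sin σ sin (δ - α) / (sin α sin β)` and
`cos² t₀ = sin α sin γ / (sin (δ - α) sin (δ - γ))`. Hence the substitution `z = p X`, `w = q Y`
turns the equation of the curve into a nonzero multiple of `X² + Y² - 2 X Y cos t₀ = sin² t₀`.
Completing the square gives `(Y - X cos t₀)² = sin² t₀ (1 - X²)`, so that a preimage `t` of `X`
under the surjective complex sine satisfies `Y = X cos t₀ ± cos t sin t₀`, and the sign is absorbed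
by `t ↦ π - t`.
-/

theorem sq_add_sq_sub_two_mul_cos_eq_sin_sq_iff (X Y t₀ : ℂ) :
    X ^ 2 + Y ^ 2 - 2 * X * Y * Complex.cos t₀ = Complex.sin t₀ ^ 2 ↔
      ∃ t, X = Complex.sin t ∧ Y = Complex.sin (t + t₀) := by
  have pyth₀ := Complex.sin_sq_add_cos_sq t₀
  constructor
  · intro hXY
    obtain ⟨t, rfl⟩ := Complex.sin_surjective X
    have hsq : (Y - Complex.sin t * Complex.cos t₀) ^ 2 =
        (Complex.cos t * Complex.sin t₀) ^ 2 := by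
      linear_combination hXY + Complex.sin t ^ 2 * pyth₀ -
        Complex.sin t₀ ^ 2 * Complex.sin_sq_add_cos_sq t
    rcases sq_eq_sq_iff_eq_or_eq_neg.mp hsq with hY | hY
    · refine ⟨t, rfl, ?_⟩
      rw [Complex.sin_add]
      linear_combination hY
    · refine ⟨π - t, (Complex.sin_pi_sub t).symm, ?_⟩
      rw [Complex.sin_add, Complex.sin_pi_sub, Complex.cos_pi_sub]
      linear_combination hY
  · rintro ⟨t, rfl, rfl⟩
    rw [Complex.sin_add]
    linear_combination (-Complex.sin t ^ 2) * pyth₀ +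
      Complex.sin t₀ ^ 2 * Complex.sin_sq_add_cos_sq t

theorem conic_eq_setOf_exists_sin {c₂₀ c₀₂ c₁₁ c₀₀ p q t₀ m : ℂ} (hm : m ≠ 0)
    (h₂₀ : c₂₀ * p ^ 2 = m) (h₀₂ : c₀₂ * q ^ 2 = m)
    (h₁₁ : c₁₁ * (p * q) = -(m * Complex.cos t₀)) (h₀₀ : c₀₀ = -(m * Complex.sin t₀ ^ 2)) :
    {zw : ℂ × ℂ | c₂₀ * zw.1 ^ 2 + c₀₂ * zw.2 ^ 2 + 2 * c₁₁ * zw.1 * zw.2 + c₀₀ = 0} =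
      {zw : ℂ × ℂ | ∃ t : ℂ, zw = (p * Complex.sin t, q * Complex.sin (t + t₀))} := by
  have hp : p ≠ 0 := by rintro rfl; exact hm (by simp [← h₂₀])
  have hq : q ≠ 0 := by rintro rfl; exact hm (by simp [← h₀₂])
  ext ⟨z, w⟩
  obtain ⟨X, rfl⟩ : ∃ X, z = p * X := ⟨z / p, (mul_div_cancel₀ z hp).symm⟩
  obtain ⟨Y, rfl⟩ : ∃ Y, w = q * Y := ⟨w / q, (mul_div_cancel₀ w hq).symm⟩
  have rescaled : c₂₀ * (p * X) ^ 2 + c₀₂ * (q * Y) ^ 2 + 2 * c₁₁ * (p * X) * (q * Y) + c₀₀ =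
      m * (X ^ 2 + Y ^ 2 - 2 * X * Y * Complex.cos t₀ - Complex.sin t₀ ^ 2) := by
    linear_combination X ^ 2 * h₂₀ + Y ^ 2 * h₀₂ + 2 * X * Y * h₁₁ + h₀₀
  simp only [Set.mem_ofPred_eq, Prod.mk.injEq, mul_right_inj' hp, mul_right_inj' hq]
  rw [rescaled, mul_eq_zero_iff_left hm, sub_eq_zero, sq_add_sq_sub_two_mul_cos_eq_sin_sq_iff]

theorem mul_mul_sq_eq_mul_of_sq_mul_eq {R : Type*} [CommRing R] [NoZeroDivisors R]
    {a b c A B S p q k : R} (hS : S ≠ 0) (hp : p ^ 2 * (b * c) = S * B)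
    (hq : q ^ 2 * (b * a) = S * A) (hpq : p * q * b * k = S) :
    A * B * k ^ 2 = a * c := by
  apply mul_left_cancel₀ (pow_ne_zero 2 hS)
  calc S ^ 2 * (A * B * k ^ 2) = (S * A) * (S * B) * k ^ 2 := by ring
    _ = (p * q * b * k) ^ 2 * (a * c) := by rw [← hp, ← hq]; ring
    _ = S ^ 2 * (a * c) := by rw [hpq]

/-- Ptolemy's theorem for an inscribed quadrilateral whose sides subtend inscribed angles `x`, `y`,
`z` and `π - (x + y + z)`. -/
theorem complex_sin_add_mul_sin_add (x y z : ℂ) :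
    Complex.sin (x + y) * Complex.sin (y + z) =
      Complex.sin x * Complex.sin z + Complex.sin y * Complex.sin (x + y + z) := by
  simp only [Complex.sin_add, Complex.cos_add]
  linear_combination Complex.sin x * Complex.sin z * Complex.sin_sq_add_cos_sq y

section ConicQuadrilateral

variable {α β γ δ p q t₀ : ℂ}

theorem sin_add_mul_sin_sub_of_add_eq_add (h : α + γ = β + δ) :
    Complex.sin (α + γ) * Complex.sin (δ - γ) =
      Complex.sin α * Complex.sin δ - Complex.sin β * Complex.sin γ := by
  have ptolemy := complex_sin_add_mul_sin_add β δ (-γ)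
  rw [← h, add_neg_cancel_right, ← sub_eq_add_neg, Complex.sin_neg] at ptolemy
  linear_combination ptolemy

theorem sin_sub_mul_sin_sub_of_add_eq_add (h : α + γ = β + δ) :
    Complex.sin (δ - α) * Complex.sin (δ - γ) =
      Complex.sin α * Complex.sin γ - Complex.sin β * Complex.sin δ := by
  have ptolemy := complex_sin_add_mul_sin_add (-α) δ (-γ)
  rw [show -α + δ = δ - α by ring, show δ + -γ = δ - γ by ring,
    show δ - α + -γ = -β by linear_combination -h] at ptolemy
  simp only [Complex.sin_neg] at ptolemy
  linear_combination ptolemy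

theorem sq_mul_sin_mul_sin_of_add_eq_add (h : α + γ = β + δ)
    (hβ : Complex.sin β ≠ 0) (hγ : Complex.sin γ ≠ 0)
    (hp : p ^ 2 = Complex.sin α * Complex.sin δ / (Complex.sin β * Complex.sin γ) - 1) :
    p ^ 2 * (Complex.sin β * Complex.sin γ) = Complex.sin (α + γ) * Complex.sin (δ - γ) := by
  rw [hp, sub_mul, div_mul_cancel₀ _ (mul_ne_zero hβ hγ), one_mul,
    sin_add_mul_sin_sub_of_add_eq_add h]

theorem conic_configuration_parametrization_general (h : α + γ = β + δ)
    (hα : Complex.sin α ≠ 0) (hγ : Complex.sin γ ≠ 0) (hσ : Complex.sin (α + γ) ≠ 0)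
    (hp : p ^ 2 = Complex.sin α * Complex.sin δ / (Complex.sin β * Complex.sin γ) - 1)
    (hq : q ^ 2 = Complex.sin γ * Complex.sin δ / (Complex.sin α * Complex.sin β) - 1)
    (ht : p * q * Complex.sin β * Complex.cos t₀ = Complex.sin (α + γ)) :
    {zw : ℂ × ℂ |
        Complex.sin γ * Complex.sin (δ - α) * zw.1 ^ 2 +
          Complex.sin α * Complex.sin (δ - γ) * zw.2 ^ 2 -
          2 * Complex.sin α * Complex.sin γ * zw.1 * zw.2 +
          Complex.sin (α + γ) * Complex.sin δ = 0} =
      {zw : ℂ × ℂ | ∃ t : ℂ, zw = (p * Complex.sin t, q * Complex.sin (t + t₀))} := by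
  obtain ⟨⟨⟨hp₀, hq₀⟩, hβ⟩, -⟩ : ((p ≠ 0 ∧ q ≠ 0) ∧ Complex.sin β ≠ 0) ∧ Complex.cos t₀ ≠ 0 := by
    simpa only [← ht, mul_ne_zero_iff] using hσ
  have hp_sq := sq_mul_sin_mul_sin_of_add_eq_add h hβ hγ hp
  have hq_sq := sq_mul_sin_mul_sin_of_add_eq_add (add_comm γ α ▸ h) hβ hα
    (mul_comm (Complex.sin α) _ ▸ hq)
  rw [add_comm γ α] at hq_sq
  have hδγ : Complex.sin (δ - γ) ≠ 0 :=
    right_ne_zero_of_mul (hp_sq ▸ mul_ne_zero (pow_ne_zero 2 hp₀) (mul_ne_zero hβ hγ))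
  have hδα : Complex.sin (δ - α) ≠ 0 :=
    right_ne_zero_of_mul (hq_sq ▸ mul_ne_zero (pow_ne_zero 2 hq₀) (mul_ne_zero hβ hα))
  have hcos_sq := mul_mul_sq_eq_mul_of_sq_mul_eq hσ hp_sq hq_sq ht
  have hconic := conic_eq_setOf_exists_sin (p := p) (q := q) (t₀ := t₀)
    (c₂₀ := Complex.sin γ * Complex.sin (δ - α)) (c₀₂ := Complex.sin α * Complex.sin (δ - γ))
    (c₁₁ := -(Complex.sin α * Complex.sin γ)) (c₀₀ := Complex.sin (α + γ) * Complex.sin δ)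
    (m := Complex.sin (α + γ) * Complex.sin (δ - α) * Complex.sin (δ - γ) / Complex.sin β)
    (div_ne_zero (mul_ne_zero (mul_ne_zero hσ hδα) hδγ) hβ)
    (by rw [eq_div_iff hβ]; linear_combination Complex.sin (δ - α) * hp_sq)
    (by rw [eq_div_iff hβ]; linear_combination Complex.sin (δ - γ) * hq_sq)
    (by
      rw [div_mul_eq_mul_div, ← neg_div, eq_div_iff hβ]
      linear_combination p * q * Complex.sin β * hcos_sq -
        Complex.sin (δ - α) * Complex.sin (δ - γ) * Complex.cos t₀ * ht)
    (by
      rw [div_mul_eq_mul_div, ← neg_div, eq_div_iff hβ]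
      linear_combination Complex.sin (α + γ) *
        (sin_sub_mul_sin_sub_of_add_eq_add h - hcos_sq +
          Complex.sin (δ - α) * Complex.sin (δ - γ) * Complex.sin_sq_add_cos_sq t₀))
  simpa only [mul_neg, neg_mul, ← sub_eq_add_neg, ← mul_assoc] using hconic

end ConicQuadrilateral

theorem conic_configuration_parametrization (α β γ δ : ℝ) (p q t₀ : ℂ)
    (h : α + γ = β + δ)
    (hα : sin α ≠ 0) (hβ : sin β ≠ 0) (hγ : sin γ ≠ 0) (hδ : sin δ ≠ 0)
    (hδα : sin (δ - α) ≠ 0) (hδγ : sin (δ - γ) ≠ 0) (hσ : sin (α + γ) ≠ 0)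
    (hp : p ^ 2 = (sin α : ℂ) * (sin δ : ℂ) / ((sin β : ℂ) * (sin γ : ℂ)) - 1)
    (hq : q ^ 2 = (sin γ : ℂ) * (sin δ : ℂ) / ((sin α : ℂ) * (sin β : ℂ)) - 1)
    (ht : p * q * (sin β : ℂ) * Complex.cos t₀ = (sin (α + γ) : ℂ)) :
    {zw : ℂ × ℂ |
        (sin γ : ℂ) * (sin (δ - α) : ℂ) * zw.1 ^ 2 +
          (sin α : ℂ) * (sin (δ - γ) : ℂ) * zw.2 ^ 2 -
          2 * (sin α : ℂ) * (sin γ : ℂ) * zw.1 * zw.2 +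
          (sin (α + γ) : ℂ) * (sin δ : ℂ) = 0} =
      {zw : ℂ × ℂ | ∃ t : ℂ, zw = (p * Complex.sin t, q * Complex.sin (t + t₀))} := by
  push_cast at hp hq ht ⊢
  exact conic_configuration_parametrization_general (mod_cast h) (mod_cast hα) (mod_cast hγ)
    (mod_cast hσ) hp hq ht
end

section
/- For all real numbers α, β, γ, δ, with σ = (α+β+γ+δ)/2 and ᾱ = σ−α, β̄ = σ−β, γ̄ = σ−γ, δ̄ = σ−δ, the identity sin ᾱ · sin γ̄ − sin β̄ · sin δ̄ = cos α · cos γ − cos β · cos δ holds. In particular, cos α · cos γ = cos β · cos δ if and only if sin ᾱ · sin γ̄ = sin β̄ · sin δ̄. -/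
open Real

theorem two_mul_sin_sub_mul_sin_sub (s x y : ℝ) :
    2 * sin (s - x) * sin (s - y) = cos (x - y) - cos (2 * s - (x + y)) := by
  rw [two_mul_sin_mul_sin, sub_sub_sub_cancel_left, ← cos_neg (y - x), neg_sub,
    sub_add_sub_comm, ← two_mul]

theorem sin_mul_sin_sub_eq_cos_mul_cos_sub_of_two_mul_eq {s a b c d : ℝ}
    (hs : 2 * s = a + b + c + d) :
    sin (s - a) * sin (s - c) - sin (s - b) * sin (s - d) = cos a * cos c - cos b * cos d := by
  have sin_ac : 2 * sin (s - a) * sin (s - c) = cos (a - c) - cos (b + d) := by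
    rw [two_mul_sin_sub_mul_sin_sub, show 2 * s - (a + c) = b + d by linarith]
  have sin_bd : 2 * sin (s - b) * sin (s - d) = cos (b - d) - cos (a + c) := by
    rw [two_mul_sin_sub_mul_sin_sub, show 2 * s - (b + d) = a + c by linarith]
  have cos_ac : 2 * cos a * cos c = cos (a - c) + cos (a + c) := two_mul_cos_mul_cos a c
  have cos_bd : 2 * cos b * cos d = cos (b - d) + cos (b + d) := two_mul_cos_mul_cos b d
  linarith

theorem orthodiagonal_equiv (α β γ δ σ αb βb γb δb : ℝ)
    (hσ : σ = (α + β + γ + δ) / 2)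
    (hα : αb = σ - α) (hβ : βb = σ - β) (hγ : γb = σ - γ) (hδ : δb = σ - δ) :
    sin αb * sin γb - sin βb * sin δb = cos α * cos γ - cos β * cos δ ∧
    (cos α * cos γ = cos β * cos δ ↔ sin αb * sin γb = sin βb * sin δb) := by
  have sin_diff_eq_cos_diff :
      sin αb * sin γb - sin βb * sin δb = cos α * cos γ - cos β * cos δ := by
    subst hα hβ hγ hδ
    exact sin_mul_sin_sub_eq_cos_mul_cos_sub_of_two_mul_eq (by linarith)
  refine ⟨sin_diff_eq_cos_diff, ?_⟩
  rw [← sub_eq_zero, ← sin_diff_eq_cos_diff, sub_eq_zero]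
end

section
/- Let α, β, γ, δ be real numbers with cos α · cos γ = cos β · cos δ, and set σ = (α+β+γ+δ)/2, ᾱ = σ−α, β̄ = σ−β, γ̄ = σ−γ, δ̄ = σ−δ. Then the following four identities hold: (i) sin(δ−α)·sin(δ−γ) = 2 cos δ · sin δ̄ · sin(σ−β−δ); (ii) sin(δ−α)·sin(δ+γ) = 2 cos δ · sin ᾱ · sin(σ−β−α); (iii) sin(δ+α)·sin(δ−γ) = 2 cos δ · sin γ̄ · sin(σ−β−γ); (iv) sin(δ+α)·sin(δ+γ) = 2 cos δ · sin β̄ · sin σ. -/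
/-!
The product `sin (d + a) * sin (d + c)` always equals `cos a * cos c - cos d * cos (a + c + d)`.
When `cos a * cos c = cos b * cos d`, the factor `cos d` comes out and leaves the difference of
cosines `cos b - cos (a + c + d)`, which sum-to-product turns into two sines. The condition is even
in `α` and `γ`, so all four sign choices `a = ±α`, `c = ±γ` are allowed; they give the four
identities.
-/

open Real

lemma sin_add_mul_sin_add (a c d : ℝ) :
    sin (d + a) * sin (d + c) = cos a * cos c - cos d * cos (a + c + d) := by
  simp only [sin_add, cos_add]
  linear_combination cos a * cos c * sin_sq_add_cos_sq d

lemma sin_add_mul_sin_add_of_cos_mul_cos_eq {a b c d : ℝ}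
    (h : cos a * cos c = cos b * cos d) :
    sin (d + a) * sin (d + c) =
      2 * cos d * sin ((a + b + c + d) / 2 - b) * sin ((a + b + c + d) / 2) := by
  calc sin (d + a) * sin (d + c)
      = cos a * cos c - cos d * cos (a + c + d) := sin_add_mul_sin_add a c d
    _ = -cos d * (cos (a + c + d) - cos b) := by rw [h]; ring
    _ = -cos d * (-2 * sin ((a + c + d + b) / 2) * sin ((a + c + d - b) / 2)) := by
      rw [cos_sub_cos]
    _ = 2 * cos d * sin ((a + b + c + d) / 2 - b) * sin ((a + b + c + d) / 2) := by
      ring_nf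

theorem orthodiagonal_identities (α β γ δ σ αb βb γb δb : ℝ)
    (h : cos α * cos γ = cos β * cos δ)
    (hσ : σ = (α + β + γ + δ) / 2)
    (hα : αb = σ - α) (hβ : βb = σ - β) (hγ : γb = σ - γ) (hδ : δb = σ - δ) :
    sin (δ - α) * sin (δ - γ) = 2 * cos δ * sin δb * sin (σ - β - δ) ∧
    sin (δ - α) * sin (δ + γ) = 2 * cos δ * sin αb * sin (σ - β - α) ∧
    sin (δ + α) * sin (δ - γ) = 2 * cos δ * sin γb * sin (σ - β - γ) ∧
    sin (δ + α) * sin (δ + γ) = 2 * cos δ * sin βb * sin σ := by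
  have neg_neg_case := sin_add_mul_sin_add_of_cos_mul_cos_eq (a := -α) (c := -γ) (by simpa using h)
  have neg_pos_case := sin_add_mul_sin_add_of_cos_mul_cos_eq (a := -α) (c := γ) (by simpa using h)
  have pos_neg_case := sin_add_mul_sin_add_of_cos_mul_cos_eq (a := α) (c := -γ) (by simpa using h)
  have pos_pos_case := sin_add_mul_sin_add_of_cos_mul_cos_eq h
  rw [show (-α + β + -γ + δ) / 2 - β = -δb by linarith,
    show (-α + β + -γ + δ) / 2 = -(σ - β - δ) by linarith, sin_neg, sin_neg] at neg_neg_case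
  rw [show (-α + β + γ + δ) / 2 - β = σ - β - α by linarith,
    show (-α + β + γ + δ) / 2 = αb by linarith] at neg_pos_case
  rw [show (α + β + -γ + δ) / 2 - β = σ - β - γ by linarith,
    show (α + β + -γ + δ) / 2 = γb by linarith] at pos_neg_case
  rw [← hσ, ← hβ] at pos_pos_case
  refine ⟨?_, ?_, ?_, pos_pos_case⟩
  · linear_combination neg_neg_case
  · linear_combination neg_pos_case
  · linear_combination pos_neg_case
end

section
/- Let α, β, γ, δ be real numbers with cos α · cos γ = cos β · cos δ and cos δ ≠ 0. Let z and w be nonzero complex numbers. Then c₂₂ z²w² + c₂₀ z² + c₀₂ w² + 2c₁₁ zw + c₀₀ = 0 holds — where c₂₂ = sin δ̄ · sin(σ−β−δ), c₂₀ = sin ᾱ · sin(σ−β−α), c₀₂ = sin γ̄ · sin(σ−β−γ), c₁₁ = −sin α · sin γ, c₀₀ = sin β̄ · sin σ, with σ = (α+β+γ+δ)/2 and ᾱ = σ−α, β̄ = σ−β, γ̄ = σ−γ, δ̄ = σ−δ — if and only if (sin(δ−α)·z + sin(δ+α)/z)·(sin(δ−γ)·w + sin(δ+γ)/w) = 4 sin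 α · sin γ · cos δ. -/
open Real

/-!
Multiplied by `2 cos δ`, the polynomial equation becomes the product equation multiplied by `z w`.
Indeed, each of `c₂₂`, `c₂₀`, `c₀₂`, `c₀₀` is, up to signs and order, a product `sin x * sin y` with
`x - y = β` and `x + y = δ ± α ± γ`, so that `2 c = cos β - cos (δ ± α ± γ)`. Multiplying by `cos δ`
and replacing `cos β cos δ` by `cos α cos γ` makes the coefficient split as
`sin (δ ± α) * sin (δ ± γ)`.
-/

lemma mul_add_div_mul_mul_add_div_eq_iff {K : Type*} [Field K] {z w : K} (hz : z ≠ 0) (hw : w ≠ 0)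
    (p q r s m : K) :
    (p * z + q / z) * (r * w + s / w) = m ↔
      (p * z ^ 2 + q) * (r * w ^ 2 + s) = m * (z * w) := by
  have hclear : (p * z + q / z) * (r * w + s / w) * (z * w) =
      (p * z ^ 2 + q) * (r * w ^ 2 + s) := by
    field_simp
  rw [← hclear, mul_left_inj' (mul_ne_zero hz hw)]

section ComplexAngles

open Complex (sin cos)

lemma two_mul_sin_mul_sin_eq_cos_sub_cos (x y : ℂ) :
    2 * (sin x * sin y) = cos (x - y) - cos (x + y) := by
  rw [Complex.cos_sub, Complex.cos_add]
  ring

lemma sin_sub_mul_sin_sub (a c d : ℂ) :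
    sin (d - a) * sin (d - c) = cos a * cos c - cos d * cos (d - a - c) := by
  simp only [Complex.cos_sub, Complex.sin_sub]
  linear_combination cos a * cos c * Complex.sin_sq_add_cos_sq d

lemma two_mul_cos_mul_sin_mul_sin_of_cos_mul_cos_eq {a b c d x y : ℂ}
    (horth : cos a * cos c = cos b * cos d) (hsub : x - y = b) (hadd : x + y = d - a - c) :
    2 * cos d * (sin x * sin y) = sin (d - a) * sin (d - c) :=
  calc 2 * cos d * (sin x * sin y)
    _ = cos d * (2 * (sin x * sin y)) := by ring
    _ = cos d * (cos b - cos (d - a - c)) := by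
      rw [two_mul_sin_mul_sin_eq_cos_sub_cos, hsub, hadd]
    _ = cos a * cos c - cos d * cos (d - a - c) := by rw [horth]; ring
    _ = sin (d - a) * sin (d - c) := (sin_sub_mul_sin_sub a c d).symm

theorem orthodiagonal_configuration_general (α β γ δ σ αb βb γb δb : ℂ)
    (h : cos α * cos γ = cos β * cos δ) (hδπ : cos δ ≠ 0)
    (hσ : σ = (α + β + γ + δ) / 2)
    (hα : αb = σ - α) (hβ : βb = σ - β) (hγ : γb = σ - γ) (hδ : δb = σ - δ)
    (z w : ℂ) (hz : z ≠ 0) (hw : w ≠ 0) :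
    (sin δb * sin (σ - β - δ) * z ^ 2 * w ^ 2 +
        sin αb * sin (σ - β - α) * z ^ 2 +
        sin γb * sin (σ - β - γ) * w ^ 2 +
        2 * -(sin α * sin γ) * z * w +
        sin βb * sin σ = 0) ↔
      (sin (δ - α) * z + sin (δ + α) / z) * (sin (δ - γ) * w + sin (δ + γ) / w) =
        4 * (sin α * sin γ * cos δ) := by
  have h22 : 2 * cos δ * (sin (-(σ - β - δ)) * sin (-δb)) = sin (δ - α) * sin (δ - γ) :=
    two_mul_cos_mul_sin_mul_sin_of_cos_mul_cos_eq h (by grind) (by grind)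
  have h20 : 2 * cos δ * (sin αb * sin (σ - β - α)) = sin (δ - α) * sin (δ - -γ) :=
    two_mul_cos_mul_sin_mul_sin_of_cos_mul_cos_eq (b := β) (by rwa [Complex.cos_neg])
      (by grind) (by grind)
  have h02 : 2 * cos δ * (sin γb * sin (σ - β - γ)) = sin (δ - -α) * sin (δ - γ) :=
    two_mul_cos_mul_sin_mul_sin_of_cos_mul_cos_eq (b := β) (by rwa [Complex.cos_neg])
      (by grind) (by grind)
  have h00 : 2 * cos δ * (sin σ * sin βb) = sin (δ - -α) * sin (δ - -γ) :=
    two_mul_cos_mul_sin_mul_sin_of_cos_mul_cos_eq (b := β)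
      (by rwa [Complex.cos_neg, Complex.cos_neg]) (by grind) (by grind)
  simp only [Complex.sin_neg, neg_mul_neg, sub_neg_eq_add] at h22 h20 h02 h00
  rw [mul_add_div_mul_mul_add_div_eq_iff hz hw, ← sub_eq_zero (b := _ * (z * w)),
    ← mul_eq_zero_iff_left (mul_ne_zero two_ne_zero hδπ)]
  refine Eq.congr_left ?_
  linear_combination z ^ 2 * w ^ 2 * h22 + z ^ 2 * h20 + w ^ 2 * h02 + h00

end ComplexAngles

theorem orthodiagonal_configuration (α β γ δ σ αb βb γb δb : ℝ)
    (h : cos α * cos γ = cos β * cos δ) (hδπ : cos δ ≠ 0)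
    (hσ : σ = (α + β + γ + δ) / 2)
    (hα : αb = σ - α) (hβ : βb = σ - β) (hγ : γb = σ - γ) (hδ : δb = σ - δ)
    (z w : ℂ) (hz : z ≠ 0) (hw : w ≠ 0) :
    ((sin δb * sin (σ - β - δ) : ℝ) * z ^ 2 * w ^ 2 +
        (sin αb * sin (σ - β - α) : ℝ) * z ^ 2 +
        (sin γb * sin (σ - β - γ) : ℝ) * w ^ 2 +
        2 * (-(sin α * sin γ) : ℝ) * z * w +
        (sin βb * sin σ : ℝ) = 0) ↔
      ((sin (δ - α) : ℝ) * z + (sin (δ + α) : ℝ) / z) *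
          ((sin (δ - γ) : ℝ) * w + (sin (δ + γ) : ℝ) / w) =
        (4 * (sin α * sin γ * cos δ) : ℝ) := by
  exact_mod_cast orthodiagonal_configuration_general α β γ δ σ αb βb γb δb (mod_cast h)
    (mod_cast hδπ) (mod_cast hσ) (mod_cast hα) (mod_cast hβ) (mod_cast hγ) (mod_cast hδ) z w hz hw
end

section
/- Let a, b, c, d be complex numbers and let t be a complex number with sin t ≠ 0. Set w₁ = a·sin t + b·cos t and w₂ = (c + d·cos t)/sin t. Then (d·w₁ + b·c)² + (w₁·w₂ − a·c)² = (b·w₂ + a·d)². Equivalently, w₁²w₂² + d²w₁² − b²w₂² − 2ac·w₁w₂ + 2bcd·w₁ − 2abd·w₂ + (a²c² + b²c² − a²d²) = 0. -/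
/-!
A point `(x, y)` of the circle `x² + y² = 1` and the values `w₁ = a x + b y`, `w₂ = (c + d y) / x`
are related linearly in `x` and `y`: eliminating `y`, respectively `x`, gives
`(b w₂ + a d) x = d w₁ + b c` and `(b w₂ + a d) y = w₁ w₂ - a c`. Squaring and adding eliminates
the point. With `w₂` determined by `w₂ x = c + d y`, no division is needed, so the elimination is
valid over every commutative ring.
-/

section CommRing

variable {R : Type*} [CommRing R] {a b c d x y w₁ w₂ : R}

theorem conic_skew_mul_fst (hw₁ : w₁ = a * x + b * y) (hw₂ : w₂ * x = c + d * y) :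
    (b * w₂ + a * d) * x = d * w₁ + b * c := by
  linear_combination b * hw₂ - d * hw₁

theorem conic_skew_mul_snd (hw₁ : w₁ = a * x + b * y) (hw₂ : w₂ * x = c + d * y) :
    (b * w₂ + a * d) * y = w₁ * w₂ - a * c := by
  linear_combination -a * hw₂ - w₂ * hw₁

theorem conic_skew_sq_add_sq (hxy : x ^ 2 + y ^ 2 = 1) (hw₁ : w₁ = a * x + b * y)
    (hw₂ : w₂ * x = c + d * y) :
    (d * w₁ + b * c) ^ 2 + (w₁ * w₂ - a * c) ^ 2 = (b * w₂ + a * d) ^ 2 :=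
  calc
    (d * w₁ + b * c) ^ 2 + (w₁ * w₂ - a * c) ^ 2
        = ((b * w₂ + a * d) * x) ^ 2 + ((b * w₂ + a * d) * y) ^ 2 := by
      rw [conic_skew_mul_fst hw₁ hw₂, conic_skew_mul_snd hw₁ hw₂]
    _ = (b * w₂ + a * d) ^ 2 * (x ^ 2 + y ^ 2) := by ring
    _ = (b * w₂ + a * d) ^ 2 := by rw [hxy, mul_one]

theorem conic_skew_sq_add_sq_iff_biquadratic :
    (d * w₁ + b * c) ^ 2 + (w₁ * w₂ - a * c) ^ 2 = (b * w₂ + a * d) ^ 2 ↔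
      w₁ ^ 2 * w₂ ^ 2 + d ^ 2 * w₁ ^ 2 - b ^ 2 * w₂ ^ 2 - 2 * a * c * w₁ * w₂ +
        2 * b * c * d * w₁ - 2 * a * b * d * w₂ +
        (a ^ 2 * c ^ 2 + b ^ 2 * c ^ 2 - a ^ 2 * d ^ 2) = 0 := by
  rw [← sub_eq_zero]
  ring_nf

theorem conic_skew_elimination_general (hxy : x ^ 2 + y ^ 2 = 1) (hw₁ : w₁ = a * x + b * y)
    (hw₂ : w₂ * x = c + d * y) :
    (d * w₁ + b * c) ^ 2 + (w₁ * w₂ - a * c) ^ 2 = (b * w₂ + a * d) ^ 2 ∧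
      w₁ ^ 2 * w₂ ^ 2 + d ^ 2 * w₁ ^ 2 - b ^ 2 * w₂ ^ 2 - 2 * a * c * w₁ * w₂ +
        2 * b * c * d * w₁ - 2 * a * b * d * w₂ +
        (a ^ 2 * c ^ 2 + b ^ 2 * c ^ 2 - a ^ 2 * d ^ 2) = 0 :=
  have sq_add_sq := conic_skew_sq_add_sq hxy hw₁ hw₂
  ⟨sq_add_sq, conic_skew_sq_add_sq_iff_biquadratic.mp sq_add_sq⟩

end CommRing

theorem conic_skew_elimination (a b c d t : ℂ) (ht : Complex.sin t ≠ 0) :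
    ((d * (a * Complex.sin t + b * Complex.cos t) + b * c) ^ 2 +
        ((a * Complex.sin t + b * Complex.cos t) *
            ((c + d * Complex.cos t) / Complex.sin t) - a * c) ^ 2 =
      (b * ((c + d * Complex.cos t) / Complex.sin t) + a * d) ^ 2) ∧
    ((a * Complex.sin t + b * Complex.cos t) ^ 2 *
          ((c + d * Complex.cos t) / Complex.sin t) ^ 2 +
        d ^ 2 * (a * Complex.sin t + b * Complex.cos t) ^ 2 -
        b ^ 2 * ((c + d * Complex.cos t) / Complex.sin t) ^ 2 -
        2 * a * c * (a * Complex.sin t + b * Complex.cos t) *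
          ((c + d * Complex.cos t) / Complex.sin t) +
        2 * b * c * d * (a * Complex.sin t + b * Complex.cos t) -
        2 * a * b * d * ((c + d * Complex.cos t) / Complex.sin t) +
        (a ^ 2 * c ^ 2 + b ^ 2 * c ^ 2 - a ^ 2 * d ^ 2) = 0) :=
  conic_skew_elimination_general (Complex.sin_sq_add_cos_sq t) rfl (div_mul_cancel₀ _ ht)
end
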